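/- Let A and B be dg categories. Suppose given a map f on objects and, for every n ≥ 1 and objects A₁, …, A_{n+1} of A, degree-0 graded maps f_n: S(A_n,A_{n+1})⊗…⊗S(A_1,A_2) → S(fA_1,fA_{n+1}) which strictly respect identities (f₁(s·id_A) = s·id_{fA} and f_n(…, s·id, …) = 0 for n ≥ 2). Then for every chain of composable morphisms α^n, …, α^1 of A in which some α^i is a scalar multiple of an identity, the defining A∞-functor equation Σ_{i=0}^{n−1} f_n∘(1^{⊗i}⊗b₁⊗1^{⊗n−(i+1)}) + Σ_{i=0}^{n−2} f_{n−1}∘(1^{⊗i}⊗b₂⊗1^{⊗n−(i+2)}) = Σ_{i=1}^{n−1} b₂∘(f_i⊗f_{n−i}) + b₁∘f_n is automatically satisfied when evaluated at (sα^n, …, sα^1). -/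

import Mathlib

/-! Core formal framework: dg categories over a field `k`, given by explicit data
(`DGData`) together with the dg-category axioms (`IsDGCat`), following the
conventions of the paper: hom-sets are `ℤ`-graded `k`-vector spaces, `d` has
degree `1`, composition is associative of degree `0`, identities are closed of
degree `0`. -/

namespace P

universe u v

structure DGData (k : Type) [Field k] where
  Obj : Type u
  Hom : Obj → Obj → ℤ → Type v
  homAdd : ∀ A B i, AddCommGroup (Hom A B i)
  homMod : ∀ A B i, Module k (Hom A B i)
  d : ∀ {A B : Obj} {i : ℤ}, Hom A B i → Hom A B (i + 1)
  comp : ∀ {A B C : Obj} {i j : ℤ}, Hom B C j → Hom A B i → Hom A C (j + i)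
  id : ∀ A : Obj, Hom A A 0

attribute [instance] DGData.homAdd DGData.homMod

variable {k : Type} [Field k]

/-- Transport of a morphism along an equality of degrees. -/
def DGData.cast (D : DGData k) {A B : D.Obj} {i i' : ℤ} (h : i = i')
    (x : D.Hom A B i) : D.Hom A B i' := h ▸ x

/-- Transport of a morphism along equalities of its source, target and degree. -/
def DGData.hcast (D : DGData k) {A A' B B' : D.Obj} {i i' : ℤ}
    (hA : A = A') (hB : B = B') (hi : i = i') (x : D.Hom A B i) :
    D.Hom A' B' i' := by
  subst hA; subst hB; subst hi; exact x

/-- The axioms making the data `D` a dg category: hom-sets are complexes of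
`k`-vector spaces, composition is `k`-bilinear, the graded Leibniz rule holds,
composition is associative, and identities are closed two-sided units. -/
structure IsDGCat (D : DGData k) : Prop where
  d_add : ∀ {A B : D.Obj} {g : ℤ} (x y : D.Hom A B g), D.d (x + y) = D.d x + D.d y
  d_smul : ∀ {A B : D.Obj} {g : ℤ} (c : k) (x : D.Hom A B g), D.d (c • x) = c • D.d x
  comp_add_left : ∀ {A B C : D.Obj} {g h : ℤ} (β₁ β₂ : D.Hom B C h) (α : D.Hom A B g),
      D.comp (β₁ + β₂) α = D.comp β₁ α + D.comp β₂ α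
  comp_add_right : ∀ {A B C : D.Obj} {g h : ℤ} (β : D.Hom B C h) (α₁ α₂ : D.Hom A B g),
      D.comp β (α₁ + α₂) = D.comp β α₁ + D.comp β α₂
  comp_smul_left : ∀ {A B C : D.Obj} {g h : ℤ} (c : k) (β : D.Hom B C h) (α : D.Hom A B g),
      D.comp (c • β) α = c • D.comp β α
  comp_smul_right : ∀ {A B C : D.Obj} {g h : ℤ} (c : k) (β : D.Hom B C h) (α : D.Hom A B g),
      D.comp β (c • α) = c • D.comp β α
  d_d : ∀ {A B : D.Obj} {g : ℤ} (x : D.Hom A B g), D.d (D.d x) = 0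
  leibniz : ∀ {A B C : D.Obj} {g h : ℤ} (β : D.Hom B C h) (α : D.Hom A B g),
      D.d (D.comp β α) =
        D.cast (by ring) (D.comp (D.d β) α) +
          ((-1 : k) ^ h) • D.cast (by ring) (D.comp β (D.d α))
  assoc : ∀ {A B C E : D.Obj} {g h l : ℤ} (γ : D.Hom C E l) (β : D.Hom B C h)
      (α : D.Hom A B g),
      D.comp γ (D.comp β α) = D.cast (by ring) (D.comp (D.comp γ β) α)
  id_comp : ∀ {A B : D.Obj} {g : ℤ} (α : D.Hom A B g),
      D.cast (zero_add g) (D.comp (D.id B) α) = α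
  comp_id : ∀ {A B : D.Obj} {g : ℤ} (α : D.Hom A B g),
      D.cast (add_zero g) (D.comp α (D.id A)) = α
  d_id : ∀ A : D.Obj, D.d (D.id A) = 0

/-- A morphism is closed if its differential vanishes. -/
def DGData.IsClosed (D : DGData k) {A B : D.Obj} {g : ℤ} (x : D.Hom A B g) : Prop :=
  D.d x = 0

/-- The Maurer-Cartan equation `d(p) + p ∘ p = 0` for a degree `1` endomorphism. -/
def DGData.MC (D : DGData k) {A : D.Obj} (p : D.Hom A A 1) : Prop :=
  D.d p + D.comp p p = 0

/-- A chain of `n` (in fact, infinitely many; only the first `n` are ever used)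
composable morphisms `α m : A m ⟶ A (m+1)`, where `α m` is recorded together
with its *shifted* degree `g m`, i.e. `α m` lies in degree `g m + 1`.  This
encodes an element `s α_n ⊗ ⋯ ⊗ s α_1` of `S(A n, A (n+1)) ⊗ ⋯ ⊗ S(A 0, A 1)`
(the chain is indexed so that index `0` is the first morphism `α^1`). -/
abbrev DGData.Chain (D : DGData k) (A : ℕ → D.Obj) (g : ℕ → ℤ) : Type _ :=
  ∀ m : ℕ, D.Hom (A m) (A (m + 1)) (g m + 1)

/-- Partial sums of the (shifted) degrees of a chain. -/
def psum (g : ℕ → ℤ) (n : ℕ) : ℤ := ∑ m ∈ Finset.range n, g m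

lemma psum_succ (g : ℕ → ℤ) (r : ℕ) : psum g (r + 1) = psum g r + g r :=
  Finset.sum_range_succ g r

lemma psum_one (g : ℕ → ℤ) : psum g 1 = g 0 := by simp [psum]

lemma psum_two (g : ℕ → ℤ) : psum g 2 = g 0 + g 1 := by
  simp [psum, Finset.sum_range_succ]

lemma psum_const_zero (n : ℕ) : psum (fun _ => (0 : ℤ)) n = 0 := by simp [psum]

lemma psum_shift (g : ℕ → ℤ) (t : ℕ) :
    ∀ r, psum (fun m => g (t + m)) r = psum g (t + r) - psum g t := by
  intro r
  induction r with
  | zero => simp [psum]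
  | succ r ih => rw [psum_succ, ih, Nat.add_succ, psum_succ]; ring

/-- Update of a chain in one slot (keeping the degree). -/
def DGData.upd0 (D : DGData k) {A : ℕ → D.Obj} {g : ℕ → ℤ} (α : D.Chain A g)
    (m : ℕ) (v : D.Hom (A m) (A (m + 1)) (g m + 1)) : D.Chain A g := fun t =>
  if h : t = m then (by subst h; exact v) else α t

/-- Objects of the chain obtained by replacing the `j` consecutive entries
starting at position `l` by a single entry. -/
def splObj {τ : Type u} (A : ℕ → τ) (l j : ℕ) : ℕ → τ := fun t =>
  if t ≤ l then A t else A (t + j - 1)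

/-- Degrees of the spliced chain; the new entry at position `l` has (shifted)
degree `w`. -/
def splG (g : ℕ → ℤ) (l j : ℕ) (w : ℤ) : ℕ → ℤ := fun t =>
  if t < l then g t else if t = l then w else g (t + j - 1)

lemma splObj_le {τ : Type u} (A : ℕ → τ) {l j t : ℕ} (h : t ≤ l) :
    splObj A l j t = A t := if_pos h

lemma splObj_gt {τ : Type u} (A : ℕ → τ) {l j t : ℕ} (h : ¬ t ≤ l) :
    splObj A l j t = A (t + j - 1) := if_neg h

lemma splObj_zero {τ : Type u} (A : ℕ → τ) (l j : ℕ) : splObj A l j 0 = A 0 :=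
  splObj_le A (Nat.zero_le l)

lemma splObj_last {τ : Type u} (A : ℕ → τ) {l j n : ℕ} (h1 : 1 ≤ j)
    (h2 : l + j ≤ n) : splObj A l j (n - j + 1) = A n := by
  unfold splObj
  rw [if_neg (by omega)]
  exact congrArg A (by omega)

lemma splG_lt {g : ℕ → ℤ} {l j : ℕ} {w : ℤ} {t : ℕ} (h : t < l) :
    splG g l j w t = g t := by unfold splG; rw [if_pos h]

lemma splG_eq {g : ℕ → ℤ} {l j : ℕ} {w : ℤ} {t : ℕ} (h : t = l) :
    splG g l j w t = w := by unfold splG; rw [if_neg (by omega), if_pos h]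

lemma splG_gt {g : ℕ → ℤ} {l j : ℕ} {w : ℤ} {t : ℕ} (h1 : ¬ t < l) (h2 : ¬ t = l) :
    splG g l j w t = g (t + j - 1) := by unfold splG; rw [if_neg h1, if_neg h2]

/-- The sum of the degrees of the spliced chain, when the inserted entry has
the degree of a degree `1` operation applied to the block it replaces. -/
lemma psum_splG (g : ℕ → ℤ) {l j n : ℕ} (h1 : 1 ≤ j) (h2 : l + j ≤ n) :
    psum (splG g l j (psum (fun m => g (l + m)) j + 1)) (n - j + 1) =
      psum g n + 1 := by
  have hln : l + 1 ≤ n - j + 1 := by omega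
  rw [psum, ← Finset.sum_range_add_sum_Ico _ hln]
  have e1 : (∑ t ∈ Finset.range (l + 1),
      splG g l j (psum (fun m => g (l + m)) j + 1) t)
      = psum g l + (psum (fun m => g (l + m)) j + 1) := by
    rw [Finset.sum_range_succ]
    congr 1
    · exact Finset.sum_congr rfl fun t ht => splG_lt (Finset.mem_range.mp ht)
    · exact splG_eq rfl
  have e2 : (∑ t ∈ Finset.Ico (l + 1) (n - j + 1),
      splG g l j (psum (fun m => g (l + m)) j + 1) t)
      = ∑ u ∈ Finset.Ico (l + j) n, g u := by
    rw [Finset.sum_Ico_eq_sum_range, Finset.sum_Ico_eq_sum_range]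
    have hc : n - j + 1 - (l + 1) = n - (l + j) := by omega
    rw [hc]
    refine Finset.sum_congr rfl fun i hi => ?_
    rw [splG_gt (by omega) (by omega)]
    congr 1
    omega
  have e3 : (∑ u ∈ Finset.Ico (l + j) n, g u) = psum g n - psum g (l + j) := by
    rw [psum, psum, Finset.sum_Ico_eq_sub _ (by omega : l + j ≤ n)]
  rw [e1, e2, e3, psum_shift g l j]
  ring

/-- The spliced chain: replace the `j` entries starting at position `l` by the
single entry `v`. -/
def DGData.splChain (D : DGData k) {A : ℕ → D.Obj} {g : ℕ → ℤ} (α : D.Chain A g)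
    (l j : ℕ) (hj : 1 ≤ j) {w : ℤ} (v : D.Hom (A l) (A (l + j)) (w + 1)) :
    D.Chain (splObj A l j) (splG g l j w) := fun t =>
  if h1 : t < l then
    D.hcast (splObj_le A (le_of_lt h1)).symm (splObj_le A (by omega)).symm
      (by rw [splG_lt h1]) (α t)
  else if h2 : t = l then
    D.hcast (by rw [show t = l from h2]; exact (splObj_le A le_rfl).symm)
      (by rw [show t = l from h2, splObj_gt A (show ¬ l + 1 ≤ l by omega)]
          exact congrArg A (by omega))
      (by rw [splG_eq h2]) v
  else
    D.hcast (splObj_gt A (by omega)).symm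
      (by rw [splObj_gt A (show ¬ t + 1 ≤ l by omega)]; exact congrArg A (by omega))
      (by rw [splG_gt h1 h2]) (α (t + j - 1))

end P

namespace P

variable {k : Type} [Field k]

/-! ## A∞-functors between dg categories

Dg categories are regarded as A∞-categories via `b₁(sα) := -s(dα)`,
`b₂(sα ⊗ sβ) := (-1)^{|α|} s(α ∘ β)`, `b_n := 0` for `n ≥ 3` (Construction
`dg_to_Ainf` of the paper), using Fukaya's sign convention.  We encode an
element `s α_n ⊗ ⋯ ⊗ s α_1` of `S(A n, A (n+1)) ⊗ ⋯ ⊗ S(A 0, A 1)` as a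
`DGData.Chain`, recording each `α m` together with its *shifted* degree `g m`.
An A∞-functor is then given by a map on objects together with, for every `n`,
a degree-0 component `f_n` sending such a chain to an element of
`S(f A 0, f A n)`, i.e. a morphism of degree `psum g n + 1`. -/

/-- The data of an A∞-functor between dg categories: its action on objects and
its components `f_n`, `n ≥ 1` (the value on chains of length `n` only depends
on the first `n` entries of the chain; this is part of `IsAInfFun` below). -/
structure AInfFunData (D E : DGData k) where
  obj : D.Obj → E.Obj
  f : ∀ (n : ℕ) (A : ℕ → D.Obj) (g : ℕ → ℤ), D.Chain A g →
    E.Hom (obj (A 0)) (obj (A n)) (psum g n + 1)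

/-- The value of `b_j` (for the A∞-structure of a dg category) on the block of
`j` consecutive entries of the chain `α` starting at position `l`:
`b₁(sα) = -s(dα)`, `b₂(sα ⊗ sβ) = (-1)^{|α|} s(α ∘ β)`, and `b_j = 0`
otherwise. -/
def DGData.blockVal (D : DGData k) {A : ℕ → D.Obj} {g : ℕ → ℤ}
    (α : D.Chain A g) (l : ℕ) :
    (j : ℕ) → D.Hom (A l) (A (l + j)) ((psum (fun m => g (l + m)) j + 1) + 1)
  | 1 => D.cast (by simp [psum_one]) (- D.d (α l))
  | 2 => ((-1 : k) ^ (g (l + 1) + 1)) •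
      D.cast (by simp only [psum_two, Nat.add_zero]; ring)
        (D.comp (α (l + 1)) (α l))
  | 0 => 0
  | (_ + 3) => 0

/-- The left hand side of the `n`-th defining equation of an A∞-functor
between dg categories (Equation (main) of the paper): the sum of the terms
`f_{i+1+l} ∘ (1^{⊗i} ⊗ b_j ⊗ 1^{⊗l})`, `j ∈ {1,2}`, with the signs coming from
Fukaya's convention. -/
def eqLhs {D E : DGData k} (F : AInfFunData D E) (n : ℕ) (A : ℕ → D.Obj)
    (g : ℕ → ℤ) (α : D.Chain A g) :
    E.Hom (F.obj (A 0)) (F.obj (A n)) ((psum g n + 1) + 1) :=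
  ∑ x ∈ Finset.range n ×ˢ Finset.range 3,
    if h : 1 ≤ x.2 ∧ x.1 + x.2 ≤ n then
      ((-1 : k) ^ (psum g n - psum g (x.1 + x.2))) •
        E.hcast (congrArg F.obj (splObj_zero A x.1 x.2))
          (congrArg F.obj (splObj_last A h.1 h.2))
          (by rw [psum_splG g h.1 h.2])
          (F.f (n - x.2 + 1) (splObj A x.1 x.2)
            (splG g x.1 x.2 (psum (fun m => g (x.1 + m)) x.2 + 1))
            (D.splChain α x.1 x.2 h.1 (D.blockVal α x.1 x.2)))
    else 0

/-- The right hand side of the `n`-th defining equation of an A∞-functor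
between dg categories: `∑_{t=1}^{n-1} b₂ ∘ (f_{n-t} ⊗ f_t) + b₁ ∘ f_n`. -/
def eqRhs {D E : DGData k} (F : AInfFunData D E) (n : ℕ) (A : ℕ → D.Obj)
    (g : ℕ → ℤ) (α : D.Chain A g) :
    E.Hom (F.obj (A 0)) (F.obj (A n)) ((psum g n + 1) + 1) :=
  (∑ t ∈ Finset.range n,
    if h : 1 ≤ t ∧ t < n then
      ((-1 : k) ^ (psum g n - psum g t + 1)) •
        E.hcast rfl (congrArg F.obj (congrArg A (by omega : t + (n - t) = n)))
          (by rw [psum_shift g t (n - t), show t + (n - t) = n from by omega]; ring)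
          (E.comp
            (F.f (n - t) (fun m => A (t + m)) (fun m => g (t + m)) (fun m => α (t + m)))
            (F.f t A g α))
    else 0) +
  (- (E.d (F.f n A g α)))

/-- The axioms for `F` to be an A∞-functor (with strict units) between dg
categories: the components `f_n` only depend on the first `n` entries of a
chain, they are `k`-multilinear, they strictly respect strict units, and they
satisfy the defining equations of an A∞-functor. -/
structure IsAInfFun {D E : DGData k} (F : AInfFunData D E) : Prop where
  ext : ∀ (n : ℕ) (A A' : ℕ → D.Obj) (g g' : ℕ → ℤ)
      (α : D.Chain A g) (α' : D.Chain A' g'),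
      (∀ m, m ≤ n → A m = A' m) → (∀ m, m < n → g m = g' m) →
      (∀ m, m < n → HEq (α m) (α' m)) → HEq (F.f n A g α) (F.f n A' g' α')
  map_add : ∀ (n : ℕ) (A : ℕ → D.Obj) (g : ℕ → ℤ) (α : D.Chain A g) (m : ℕ),
      m < n → ∀ u v : D.Hom (A m) (A (m + 1)) (g m + 1),
      F.f n A g (D.upd0 α m (u + v)) =
        F.f n A g (D.upd0 α m u) + F.f n A g (D.upd0 α m v)
  map_smul : ∀ (n : ℕ) (A : ℕ → D.Obj) (g : ℕ → ℤ) (α : D.Chain A g) (m : ℕ),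
      m < n → ∀ (c : k) (u : D.Hom (A m) (A (m + 1)) (g m + 1)),
      F.f n A g (D.upd0 α m (c • u)) = c • F.f n A g (D.upd0 α m u)
  unit_one : ∀ A₀ : D.Obj,
      F.f 1 (fun _ => A₀) (fun _ => (-1 : ℤ))
          (fun _ => D.cast (by norm_num) (D.id A₀)) =
        E.cast (by norm_num [psum]) (E.id (F.obj A₀))
  unit_vanish : ∀ (n : ℕ) (A : ℕ → D.Obj) (g : ℕ → ℤ) (α : D.Chain A g) (m : ℕ),
      2 ≤ n → m < n → A (m + 1) = A m → g m = -1 →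
      HEq (α m) (D.id (A m)) → F.f n A g α = 0
  eqn : ∀ n, 1 ≤ n → ∀ (A : ℕ → D.Obj) (g : ℕ → ℤ) (α : D.Chain A g),
      eqLhs F n A g α = eqRhs F n A g α

/-- The functor induced on homotopy categories sends (the class of) a closed
degree-0 morphism `φ` to (the class of) `s⁻¹ (f₁ (s φ))`.  We record the
underlying assignment, used to express `H⁰(F)`. -/
def AInfFunData.h0map {D E : DGData k} (F : AInfFunData D E) {A B : D.Obj}
    (φ : D.Hom A B 0) : E.Hom (F.obj A) (F.obj B) 0 :=
  E.hcast (congrArg F.obj rfl) (congrArg F.obj rfl) (by norm_num [psum])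
    (F.f 1 (fun m => if m = 0 then A else B) (fun _ => (-1 : ℤ))
      (fun m => Nat.rec (motive := fun m =>
          D.Hom ((fun m => if m = 0 then A else B) m)
            ((fun m => if m = 0 then A else B) (m + 1)) (-1 + 1))
        (D.cast (by norm_num) φ) (fun _ _ => 0) m))

end P

/-!
Only two kinds of terms survive when the entry `α m = c • id` of the chain is fed into the
`A∞`-functor equation.  On the left, `b₁` kills the identity, and `f_r` with `r ≥ 2` kills every
chain still containing it, so the identity must be absorbed by a `b₂`, either with its successor
or with its predecessor.  On the right, it must be alone inside an `f₁`, hence it is the first or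
the last entry of the chain.  Each surviving term is, up to sign, the value of `f_{n-1}` on the
chain with the identity erased.  The two terms on the left carry opposite signs, so they cancel for
an interior identity; at either end of a chain of length at least two, the one remaining term on
the left equals the one on the right.
-/

namespace P

section

variable {k : Type} [Field k]

namespace DGData

/-- The morphisms of `D` of all sources, targets and degrees.  Equality in this type replaces
heterogeneous equality between hom-spaces whose objects and degrees agree only propositionally. -/
structure Mor (D : DGData k) where
  toMor ::
  {src tgt : D.Obj}
  {deg : ℤ}
  hom : D.Hom src tgt deg

/-- The part of the axioms of a dg category that concerns scalars and identities. -/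
structure IsHomogeneousUnital (D : DGData k) : Prop where
  d_smul : ∀ {A B : D.Obj} {g : ℤ} (c : k) (x : D.Hom A B g), D.d (c • x) = c • D.d x
  comp_smul_left : ∀ {A B C : D.Obj} {g h : ℤ} (c : k) (β : D.Hom B C h) (α : D.Hom A B g),
      D.comp (c • β) α = c • D.comp β α
  comp_smul_right : ∀ {A B C : D.Obj} {g h : ℤ} (c : k) (β : D.Hom B C h) (α : D.Hom A B g),
      D.comp β (c • α) = c • D.comp β α
  id_comp : ∀ {A B : D.Obj} {g : ℤ} (α : D.Hom A B g),
      D.cast (zero_add g) (D.comp (D.id B) α) = α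
  comp_id : ∀ {A B : D.Obj} {g : ℤ} (α : D.Hom A B g),
      D.cast (add_zero g) (D.comp α (D.id A)) = α
  d_id : ∀ A : D.Obj, D.d (D.id A) = 0

variable {D : DGData k}

section

variable {A A' B B' : D.Obj} {i i' : ℤ}

lemma cast_zero (h : i = i') : D.cast h (0 : D.Hom A B i) = 0 := by
  subst h
  rfl

lemma hcast_zero (hA : A = A') (hB : B = B') (hi : i = i') :
    D.hcast hA hB hi (0 : D.Hom A B i) = 0 := by
  subst hA hB hi
  rfl

end

namespace Mor

instance : MulAction k D.Mor where
  smul c x := ⟨c • x.hom⟩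
  one_smul x := congrArg Mor.toMor (one_smul k x.hom)
  mul_smul a b x := congrArg Mor.toMor (mul_smul a b x.hom)

variable {A A' B B' : D.Obj} {i i' : ℤ}

lemma toMor_smul (c : k) (x : D.Hom A B i) : toMor (c • x) = c • toMor x := rfl

lemma toMor_neg (x : D.Hom A B i) : toMor (-x) = (-1 : k) • toMor x := by
  rw [← toMor_smul, neg_one_smul]

lemma toMor_injective : Function.Injective (toMor : D.Hom A B i → D.Mor) := by
  rintro x y ⟨⟩
  rfl

lemma tgt_eq_src_of_eq_smul_id {x : D.Hom A B i} {c : k} {X : D.Obj}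
    (h : toMor x = c • toMor (D.id X)) : B = A :=
  (congrArg tgt h).trans (congrArg src h).symm

lemma deg_eq_zero_of_eq_smul_id {x : D.Hom A B i} {c : k} {X : D.Obj}
    (h : toMor x = c • toMor (D.id X)) : i = 0 :=
  congrArg deg h

lemma toMor_cast (h : i = i') (x : D.Hom A B i) : toMor (D.cast h x) = toMor x := by
  subst h
  rfl

lemma toMor_hcast (hA : A = A') (hB : B = B') (hi : i = i') (x : D.Hom A B i) :
    toMor (D.hcast hA hB hi x) = toMor x := by
  subst hA hB hi
  rfl

lemma toMor_eq_toMor (hA : A = A') (hB : B = B') (hi : i = i') {x : D.Hom A B i}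
    {y : D.Hom A' B' i'} (h : HEq x y) : toMor x = toMor y := by
  subst hA hB hi
  rw [eq_of_heq h]

lemma heq_of_toMor_eq_toMor {x : D.Hom A B i} {y : D.Hom A' B' i'}
    (h : toMor x = toMor y) : HEq x y := by
  cases h
  rfl

end Mor

open Mor

namespace IsHomogeneousUnital

variable {A B C X : D.Obj} {i j : ℤ} {c : k}

lemma d_zero (hD : D.IsHomogeneousUnital) : D.d (0 : D.Hom A B i) = 0 := by
  simpa only [zero_smul] using hD.d_smul 0 (0 : D.Hom A B i)

lemma comp_zero (hD : D.IsHomogeneousUnital) (β : D.Hom B C j) :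
    D.comp β (0 : D.Hom A B i) = 0 := by
  simpa only [zero_smul] using hD.comp_smul_right 0 β (0 : D.Hom A B i)

lemma zero_comp (hD : D.IsHomogeneousUnital) (α : D.Hom A B i) :
    D.comp (0 : D.Hom B C j) α = 0 := by
  simpa only [zero_smul] using hD.comp_smul_left 0 (0 : D.Hom B C j) α

lemma d_eq_zero_of_toMor_eq_smul_id (hD : D.IsHomogeneousUnital) {x : D.Hom A B i}
    (hx : toMor x = c • toMor (D.id X)) : D.d x = 0 := by
  rw [← toMor_smul] at hx
  cases hx
  rw [hD.d_smul, hD.d_id, smul_zero]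

lemma toMor_comp_of_right_eq_smul_id (hD : D.IsHomogeneousUnital) (β : D.Hom B C j)
    {α : D.Hom A B i} (hα : toMor α = c • toMor (D.id X)) : toMor (D.comp β α) = c • toMor β := by
  rw [← toMor_smul] at hα
  cases hα
  rw [hD.comp_smul_right, toMor_smul, ← toMor_cast (add_zero j), hD.comp_id]

lemma toMor_comp_of_left_eq_smul_id (hD : D.IsHomogeneousUnital) {β : D.Hom B C j}
    (α : D.Hom A B i) (hβ : toMor β = c • toMor (D.id X)) : toMor (D.comp β α) = c • toMor α := by
  rw [← toMor_smul] at hβ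
  cases hβ
  rw [hD.comp_smul_left, toMor_smul, ← toMor_cast (zero_add i), hD.id_comp]

end IsHomogeneousUnital

section Chain

variable {A : ℕ → D.Obj} {g : ℕ → ℤ}

lemma upd0_eq_update (α : D.Chain A g) (m : ℕ) (v : D.Hom (A m) (A (m + 1)) (g m + 1)) :
    D.upd0 α m v = Function.update α m v := by
  funext t
  by_cases h : t = m
  · subst h
    simp only [upd0, dite_true, Function.update_self]
  · simp only [upd0, h, dite_false, Function.update_of_ne, ne_eq, not_false_eq_true]

section Splice

variable (α : D.Chain A g) {l j t : ℕ} (hj : 1 ≤ j) {w : ℤ}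
  (v : D.Hom (A l) (A (l + j)) (w + 1))

lemma toMor_splChain_of_lt (h : t < l) : toMor (D.splChain α l j hj v t) = toMor (α t) := by
  rw [splChain, dif_pos h, toMor_hcast]

lemma toMor_splChain_self : toMor (D.splChain α l j hj v l) = toMor v := by
  rw [splChain, dif_neg (lt_irrefl l), dif_pos rfl, toMor_hcast]

lemma toMor_splChain_of_gt (h : l < t) :
    toMor (D.splChain α l j hj v t) = toMor (α (t + j - 1)) := by
  rw [splChain, dif_neg h.not_gt, dif_neg h.ne', toMor_hcast]

end Splice

lemma blockVal_one_eq_zero {α : D.Chain A g} {l : ℕ} (h : D.d (α l) = 0) :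
    D.blockVal α l 1 = 0 := by
  rw [blockVal, h, neg_zero, cast_zero]

lemma toMor_blockVal_two (α : D.Chain A g) (l : ℕ) :
    toMor (D.blockVal α l 2) =
      ((-1 : k) ^ (g (l + 1) + 1)) • toMor (D.comp (α (l + 1)) (α l)) := by
  rw [blockVal, toMor_smul, toMor_cast]

/-- The chain obtained by erasing the endomorphism `α m`, encoded as the splice that replaces
the block `α (m + 1), α m` by `α (m + 1)`. -/
def eraseLoop (α : D.Chain A g) (m : ℕ) (hA : A (m + 1) = A m) :
    D.Chain (splObj A m 2) (splG g m 2 (g (m + 1))) :=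
  D.splChain α m 2 one_le_two (D.hcast hA rfl rfl (α (m + 1)))

lemma toMor_eraseLoop_of_lt (α : D.Chain A g) {m t : ℕ} (hA : A (m + 1) = A m) (h : t < m) :
    toMor (D.eraseLoop α m hA t) = toMor (α t) :=
  toMor_splChain_of_lt α one_le_two _ h

lemma toMor_eraseLoop_of_le (α : D.Chain A g) {m t : ℕ} (hA : A (m + 1) = A m) (h : m ≤ t) :
    toMor (D.eraseLoop α m hA t) = toMor (α (t + 1)) := by
  rcases h.eq_or_lt with rfl | h
  · rw [eraseLoop, toMor_splChain_self, toMor_hcast]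
  · exact toMor_splChain_of_gt α one_le_two _ h

end Chain

end DGData

open DGData DGData.Mor

lemma IsDGCat.isHomogeneousUnital {D : DGData k} (hD : IsDGCat D) : D.IsHomogeneousUnital where
  d_smul := hD.d_smul
  comp_smul_left := hD.comp_smul_left
  comp_smul_right := hD.comp_smul_right
  id_comp := hD.id_comp
  comp_id := hD.comp_id
  d_id := hD.d_id

lemma splObj_two_of_le {τ : Type*} {A : ℕ → τ} {m t : ℕ} (hA : A (m + 1) = A m) (h : m ≤ t) :
    splObj A m 2 t = A (t + 1) := by
  rcases h.eq_or_lt with rfl | h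
  · rw [splObj_le A le_rfl, hA]
  · exact splObj_gt A h.not_ge

lemma psum_congr {g g' : ℕ → ℤ} {n : ℕ} (h : ∀ t < n, g t = g' t) : psum g n = psum g' n :=
  Finset.sum_congr rfl fun t ht => h t (Finset.mem_range.mp ht)

lemma psum_splG_two (g : ℕ → ℤ) {m N : ℕ} (h : m ≤ N) :
    psum (splG g m 2 (g (m + 1))) N = psum g (N + 1) - g m := by
  induction N, h using Nat.le_induction with
  | base => rw [psum_congr fun t ht => splG_lt ht, psum_succ, add_sub_cancel_right]
  | succ N hN ih =>
    have hlast : splG g m 2 (g (m + 1)) N = g (N + 1) := by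
      rcases hN.eq_or_lt with rfl | hlt
      · exact splG_eq rfl
      · exact splG_gt hlt.not_gt hlt.ne'
    rw [psum_succ, ih, hlast, psum_succ g (N + 1)]
    ring

namespace AInfFunData

variable {D E : DGData k}

/-- The components of `F` depend only on the listed entries, are homogeneous in each entry, and
strictly respect identities. -/
structure IsStrictlyUnital (F : AInfFunData D E) : Prop where
  ext : ∀ (n : ℕ) (A A' : ℕ → D.Obj) (g g' : ℕ → ℤ)
      (α : D.Chain A g) (α' : D.Chain A' g'),
      (∀ m, m ≤ n → A m = A' m) → (∀ m, m < n → g m = g' m) →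
      (∀ m, m < n → HEq (α m) (α' m)) → HEq (F.f n A g α) (F.f n A' g' α')
  map_smul : ∀ (n : ℕ) (A : ℕ → D.Obj) (g : ℕ → ℤ) (α : D.Chain A g) (m : ℕ),
      m < n → ∀ (c : k) (u : D.Hom (A m) (A (m + 1)) (g m + 1)),
      F.f n A g (D.upd0 α m (c • u)) = c • F.f n A g (D.upd0 α m u)
  unit_one : ∀ A₀ : D.Obj,
      F.f 1 (fun _ => A₀) (fun _ => (-1 : ℤ))
          (fun _ => D.cast (by norm_num) (D.id A₀)) =
        E.cast (by norm_num [psum]) (E.id (F.obj A₀))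
  unit_vanish : ∀ (n : ℕ) (A : ℕ → D.Obj) (g : ℕ → ℤ) (α : D.Chain A g) (m : ℕ),
      2 ≤ n → m < n → A (m + 1) = A m → g m = -1 →
      HEq (α m) (D.id (A m)) → F.f n A g α = 0

variable {F : AInfFunData D E} {A A' : ℕ → D.Obj} {g g' : ℕ → ℤ} {α : D.Chain A g}
  {α' : D.Chain A' g'} {n m l t : ℕ} {c : k} {X : D.Obj}

namespace IsStrictlyUnital

lemma toMor_f_congr (hF : F.IsStrictlyUnital) (hn : 0 < n)
    (h : ∀ t < n, toMor (α t) = toMor (α' t)) : toMor (F.f n A g α) = toMor (F.f n A' g' α') := by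
  have hA : ∀ t ≤ n, A t = A' t := by
    intro t ht
    rcases ht.lt_or_eq with ht | rfl
    · exact congrArg src (h t ht)
    · obtain ⟨s, rfl⟩ := Nat.exists_eq_add_of_le' hn
      exact congrArg tgt (h s s.lt_succ_self)
  have hg : ∀ t < n, g t = g' t := fun t ht => add_right_cancel (congrArg deg (h t ht))
  exact toMor_eq_toMor (by rw [hA 0 n.zero_le]) (by rw [hA n le_rfl]) (by rw [psum_congr hg])
    (hF.ext n A A' g g' α α' hA hg fun t ht => heq_of_toMor_eq_toMor (h t ht))

lemma toMor_f_smul (hF : F.IsStrictlyUnital) (hl : l < n)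
    (hne : ∀ t < n, t ≠ l → toMor (α t) = toMor (α' t)) (hself : toMor (α l) = c • toMor (α' l)) :
    toMor (F.f n A g α) = c • toMor (F.f n A' g' α') := by
  have hsmul := hF.map_smul n A' g' α' l hl c (α' l)
  simp only [upd0_eq_update, Function.update_eq_self] at hsmul
  rw [← toMor_smul, ← hsmul]
  refine hF.toMor_f_congr (by omega) fun t ht => ?_
  by_cases htl : t = l
  · subst htl
    rw [hself, Function.update_self, toMor_smul]
  · rw [Function.update_of_ne htl, hne t ht htl]

lemma f_eq_zero_of_entry_eq_zero (hF : F.IsStrictlyUnital) (hl : l < n) (h : α l = 0) :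
    F.f n A g α = 0 := by
  have hsmul : toMor (F.f n A g α) = (0 : k) • toMor (F.f n A g α) :=
    hF.toMor_f_smul hl (fun _ _ _ => rfl) (by rw [h, ← toMor_smul, smul_zero])
  rw [← toMor_smul, zero_smul] at hsmul
  exact toMor_injective hsmul

lemma f_eq_zero_of_toMor_eq_smul_id (hF : F.IsStrictlyUnital) (hn : 2 ≤ n) (hm : m < n)
    (hid : toMor (α m) = c • toMor (D.id X)) : F.f n A g α = 0 := by
  obtain rfl : A m = X := congrArg src hid
  have hA : A (m + 1) = A m := tgt_eq_src_of_eq_smul_id hid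
  have hg : g m + 1 = 0 := deg_eq_zero_of_eq_smul_id hid
  let u : D.Hom (A m) (A (m + 1)) (g m + 1) := D.hcast rfl hA.symm hg.symm (D.id (A m))
  have hu : toMor u = toMor (D.id (A m)) := toMor_hcast ..
  have hvanish : F.f n A g (Function.update α m u) = 0 :=
    hF.unit_vanish n A g _ m hn hm hA (by omega)
      (by rw [Function.update_self]; exact heq_of_toMor_eq_toMor hu)
  have hsmul : toMor (F.f n A g α) = c • toMor (F.f n A g (Function.update α m u)) :=
    hF.toMor_f_smul hm (fun t _ ht => by rw [Function.update_of_ne ht])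
      (by rw [Function.update_self, hid, hu])
  rw [hvanish, ← toMor_smul, smul_zero] at hsmul
  exact toMor_injective hsmul

lemma toMor_f_one (hF : F.IsStrictlyUnital) (hid : toMor (α 0) = c • toMor (D.id X)) :
    toMor (F.f 1 A g α) = c • toMor (E.id (F.obj X)) := by
  have hunit := congrArg toMor (hF.unit_one X)
  rw [toMor_cast] at hunit
  rw [← hunit]
  exact hF.toMor_f_smul one_pos (fun t ht ht0 => absurd (Nat.lt_one_iff.mp ht) ht0)
    (by rw [hid, toMor_cast])

lemma d_f_eq_zero (hF : F.IsStrictlyUnital) (hE : E.IsHomogeneousUnital) (hm : m < n)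
    (hid : toMor (α m) = c • toMor (D.id X)) : E.d (F.f n A g α) = 0 := by
  rcases (show n = 1 ∨ 2 ≤ n by omega) with rfl | hn
  · obtain rfl : m = 0 := by omega
    exact hE.d_eq_zero_of_toMor_eq_smul_id (hF.toMor_f_one hid)
  · rw [hF.f_eq_zero_of_toMor_eq_smul_id hn hm hid, hE.d_zero]

end IsStrictlyUnital

section Terms

variable (F n α)

/-- The summand `f_{n-j+1} ∘ (1 ⊗ b_j ⊗ 1^{⊗ l})` of `eqLhs`, with `b_j` applied to the block of
length `j` starting at position `l`. -/
def lhsTerm (l j : ℕ) : E.Hom (F.obj (A 0)) (F.obj (A n)) (psum g n + 1 + 1) :=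
  if h : 1 ≤ j ∧ l + j ≤ n then
    ((-1 : k) ^ (psum g n - psum g (l + j))) •
      E.hcast (congrArg F.obj (splObj_zero A l j)) (congrArg F.obj (splObj_last A h.1 h.2))
        (by rw [psum_splG g h.1 h.2])
        (F.f (n - j + 1) _ _ (D.splChain α l j h.1 (D.blockVal α l j)))
  else 0

/-- The summand `b₂ ∘ (f_{n-t} ⊗ f_t)` of `eqRhs`. -/
def rhsTerm (t : ℕ) : E.Hom (F.obj (A 0)) (F.obj (A n)) (psum g n + 1 + 1) :=
  if h : 1 ≤ t ∧ t < n then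
    ((-1 : k) ^ (psum g n - psum g t + 1)) •
      E.hcast rfl (congrArg F.obj (congrArg A (Nat.add_sub_of_le h.2.le)))
        (by rw [psum_shift g t (n - t), Nat.add_sub_of_le h.2.le]; ring)
        (E.comp (F.f (n - t) _ _ fun m => α (t + m)) (F.f t A g α))
  else 0

lemma eqLhs_eq_sum : eqLhs F n A g α = ∑ l ∈ Finset.range n, ∑ j ∈ Finset.range 3,
    lhsTerm F α n l j :=
  Finset.sum_product ..

lemma eqRhs_eq_sum :
    eqRhs F n A g α = ∑ t ∈ Finset.range n, rhsTerm F α n t - E.d (F.f n A g α) :=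
  (sub_eq_add_neg _ _).symm

variable {F n α}

lemma toMor_lhsTerm {j : ℕ} (hj : 1 ≤ j) (hn : l + j ≤ n) :
    toMor (lhsTerm F α n l j) = ((-1 : k) ^ (psum g n - psum g (l + j))) •
      toMor (F.f (n - j + 1) _ _ (D.splChain α l j hj (D.blockVal α l j))) := by
  rw [lhsTerm, dif_pos ⟨hj, hn⟩, toMor_smul, toMor_hcast]

lemma lhsTerm_eq_zero {j : ℕ}
    (h : ∀ hj : 1 ≤ j, l + j ≤ n →
      F.f (n - j + 1) _ _ (D.splChain α l j hj (D.blockVal α l j)) = 0) :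
    lhsTerm F α n l j = 0 := by
  by_cases hjn : 1 ≤ j ∧ l + j ≤ n
  · rw [lhsTerm, dif_pos hjn, h hjn.1 hjn.2, hcast_zero, smul_zero]
  · rw [lhsTerm, dif_neg hjn]

lemma toMor_rhsTerm (ht : 1 ≤ t) (htn : t < n) :
    toMor (rhsTerm F α n t) = ((-1 : k) ^ (psum g n - psum g t + 1)) •
      toMor (E.comp (F.f (n - t) _ _ fun m => α (t + m)) (F.f t A g α)) := by
  rw [rhsTerm, dif_pos ⟨ht, htn⟩, toMor_smul, toMor_hcast]

lemma rhsTerm_eq_zero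
    (h : 1 ≤ t → t < n → E.comp (F.f (n - t) _ _ fun m => α (t + m)) (F.f t A g α) = 0) :
    rhsTerm F α n t = 0 := by
  by_cases htn : 1 ≤ t ∧ t < n
  · rw [rhsTerm, dif_pos htn, h htn.1 htn.2, hcast_zero, smul_zero]
  · rw [rhsTerm, dif_neg htn]

variable (F) in
/-- The value, up to sign, of each summand of the `n`-th `A∞`-functor equation that survives when
`α m = c • id`: the scalar `c` times the value of `f_{n-1}` on the chain without `α m`. -/
def unitTerm (hm : m < n) (hid : toMor (α m) = c • toMor (D.id X)) :
    E.Hom (F.obj (A 0)) (F.obj (A n)) (psum g n + 1 + 1) :=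
  have hA : A (m + 1) = A m := tgt_eq_src_of_eq_smul_id hid
  have hg : g m + 1 = 0 := deg_eq_zero_of_eq_smul_id hid
  have hn : n - 1 + 1 = n := Nat.sub_add_cancel (by omega)
  ((-1 : k) ^ (psum g n - psum g (m + 1)) * c) •
    E.hcast (congrArg F.obj (splObj_zero A m 2))
      (by rw [splObj_two_of_le hA (by omega), hn])
      (by rw [psum_splG_two g (by omega), hn, eq_neg_of_add_eq_zero_left hg]; ring)
      (F.f (n - 1) _ _ (D.eraseLoop α m hA))

lemma toMor_unitTerm (hm : m < n) (hid : toMor (α m) = c • toMor (D.id X)) :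
    toMor (unitTerm F hm hid) = ((-1 : k) ^ (psum g n - psum g (m + 1)) * c) •
      toMor (F.f (n - 1) _ _ (D.eraseLoop α m (tgt_eq_src_of_eq_smul_id hid))) := by
  rw [unitTerm, toMor_smul, toMor_hcast]

end Terms

namespace IsStrictlyUnital

lemma lhsTerm_one_eq_zero (hF : F.IsStrictlyUnital) (hD : D.IsHomogeneousUnital) (hm : m < n)
    (hid : toMor (α m) = c • toMor (D.id X)) : lhsTerm F α n l 1 = 0 := by
  refine lhsTerm_eq_zero fun hj hln => ?_
  rcases lt_trichotomy m l with hml | rfl | hlm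
  · exact hF.f_eq_zero_of_toMor_eq_smul_id (by omega) (by omega)
      ((toMor_splChain_of_lt α hj _ hml).trans hid)
  · refine hF.f_eq_zero_of_entry_eq_zero (by omega) (l := m) ?_
    have hblock : D.blockVal α m 1 = 0 :=
      blockVal_one_eq_zero (hD.d_eq_zero_of_toMor_eq_smul_id hid)
    rw [hblock, splChain, dif_neg (lt_irrefl m), dif_pos rfl, hcast_zero]
  · exact hF.f_eq_zero_of_toMor_eq_smul_id (by omega) (by omega)
      ((toMor_splChain_of_gt α hj _ hlm).trans hid)

lemma lhsTerm_two_eq_zero (hF : F.IsStrictlyUnital) (hm : m < n)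
    (hid : toMor (α m) = c • toMor (D.id X)) (hl : l ≠ m) (hlm : l + 1 ≠ m) :
    lhsTerm F α n l 2 = 0 := by
  refine lhsTerm_eq_zero fun hj hln => ?_
  rcases hl.lt_or_gt with hlt | hgt
  · obtain ⟨s, rfl⟩ := Nat.exists_eq_add_of_lt hlt
    exact hF.f_eq_zero_of_toMor_eq_smul_id (by omega) (m := l + s) (by omega)
      ((toMor_splChain_of_gt α hj _ (by omega)).trans hid)
  · exact hF.f_eq_zero_of_toMor_eq_smul_id (by omega) (by omega)
      ((toMor_splChain_of_lt α hj _ hgt).trans hid)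

lemma lhsTerm_self_two (hF : F.IsStrictlyUnital) (hD : D.IsHomogeneousUnital)
    (hid : toMor (α m) = c • toMor (D.id X)) (hmn : m + 2 ≤ n) :
    lhsTerm F α n m 2 = -unitTerm F (Nat.lt_of_succ_lt hmn) hid := by
  have hA : A (m + 1) = A m := tgt_eq_src_of_eq_smul_id hid
  have hf : toMor (F.f (n - 2 + 1) _ _ (D.splChain α m 2 one_le_two (D.blockVal α m 2))) =
      ((-1 : k) ^ (g (m + 1) + 1) * c) • toMor (F.f (n - 1) _ _ (D.eraseLoop α m hA)) := by
    rw [show n - 2 + 1 = n - 1 by omega]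
    refine hF.toMor_f_smul (l := m) (by omega) (fun t _ ht => ?_) ?_
    · rcases ht.lt_or_gt with ht | ht
      · rw [toMor_splChain_of_lt _ _ _ ht, toMor_eraseLoop_of_lt α hA ht]
      · rw [toMor_splChain_of_gt _ _ _ ht, toMor_eraseLoop_of_le α hA ht.le]
        rfl
    · rw [toMor_splChain_self, toMor_blockVal_two, hD.toMor_comp_of_right_eq_smul_id _ hid,
        toMor_eraseLoop_of_le α hA le_rfl, smul_smul]
  have hsign : psum g n - psum g (m + 2) + (g (m + 1) + 1) = 1 + (psum g n - psum g (m + 1)) := by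
    rw [psum_succ g (m + 1)]
    ring
  apply toMor_injective
  rw [toMor_lhsTerm one_le_two hmn, hf, toMor_neg, toMor_unitTerm, smul_smul, smul_smul,
    ← mul_assoc, ← mul_assoc, ← zpow_add₀ (neg_ne_zero.mpr one_ne_zero), hsign,
    zpow_one_add₀ (neg_ne_zero.mpr one_ne_zero)]

lemma lhsTerm_pred_two (hF : F.IsStrictlyUnital) (hD : D.IsHomogeneousUnital) (hm : l + 1 < n)
    (hid : toMor (α (l + 1)) = c • toMor (D.id X)) :
    lhsTerm F α n l 2 = unitTerm F hm hid := by
  have hA : A (l + 1 + 1) = A (l + 1) := tgt_eq_src_of_eq_smul_id hid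
  have hg : g (l + 1) + 1 = 0 := deg_eq_zero_of_eq_smul_id hid
  have hf : toMor (F.f (n - 2 + 1) _ _ (D.splChain α l 2 one_le_two (D.blockVal α l 2))) =
      c • toMor (F.f (n - 1) _ _ (D.eraseLoop α (l + 1) hA)) := by
    rw [show n - 2 + 1 = n - 1 by omega]
    refine hF.toMor_f_smul (l := l) (by omega) (fun t _ ht => ?_) ?_
    · rcases ht.lt_or_gt with ht | ht
      · rw [toMor_splChain_of_lt _ _ _ ht, toMor_eraseLoop_of_lt α hA (by omega)]
      · rw [toMor_splChain_of_gt _ _ _ ht, toMor_eraseLoop_of_le α hA ht]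
        rfl
    · rw [toMor_splChain_self, toMor_blockVal_two, hD.toMor_comp_of_left_eq_smul_id _ hid,
        toMor_eraseLoop_of_lt α hA l.lt_succ_self, hg, zpow_zero, one_smul]
  apply toMor_injective
  rw [toMor_lhsTerm one_le_two hm, hf, toMor_unitTerm, smul_smul]
  rfl

lemma eqLhs_eq (hF : F.IsStrictlyUnital) (hD : D.IsHomogeneousUnital) (hm : m < n)
    (hid : toMor (α m) = c • toMor (D.id X)) :
    eqLhs F n A g α = (if m + 2 ≤ n then -unitTerm F hm hid else 0) +
      if 1 ≤ m then unitTerm F hm hid else 0 := by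
  have hterm : ∀ l, ∑ j ∈ Finset.range 3, lhsTerm F α n l j =
      (if l = m then if m + 2 ≤ n then -unitTerm F hm hid else 0 else 0) +
        if l + 1 = m then unitTerm F hm hid else 0 := by
    intro l
    rw [Finset.sum_range_succ, Finset.sum_range_succ, Finset.sum_range_one,
      lhsTerm_eq_zero fun hj => absurd hj (by omega), hF.lhsTerm_one_eq_zero hD hm hid, add_zero,
      zero_add]
    by_cases hl : l = m
    · subst hl
      rw [if_pos rfl, if_neg l.succ_ne_self, add_zero]
      split_ifs with hln
      · exact hF.lhsTerm_self_two hD hid hln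
      · exact lhsTerm_eq_zero fun _ h => absurd h hln
    · rw [if_neg hl, zero_add]
      split_ifs with hlm
      · subst hlm
        exact hF.lhsTerm_pred_two hD hm hid
      · exact hF.lhsTerm_two_eq_zero hm hid hl hlm
  rw [eqLhs_eq_sum, Finset.sum_congr rfl fun l _ => hterm l, Finset.sum_add_distrib,
    Finset.sum_ite_eq', if_pos (Finset.mem_range.mpr hm)]
  congr 1
  rcases m with _ | m
  · exact Finset.sum_eq_zero fun l _ => if_neg l.succ_ne_zero
  · simp only [Nat.add_right_cancel_iff, Finset.sum_ite_eq', Finset.mem_range,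
      Nat.lt_of_succ_lt hm, Nat.le_add_left, if_true]

lemma rhsTerm_eq_zero_of_lt (hF : F.IsStrictlyUnital) (hE : E.IsHomogeneousUnital)
    (hid : toMor (α m) = c • toMor (D.id X)) (hmt : m < t) (ht : t ≠ 1) :
    rhsTerm F α n t = 0 :=
  rhsTerm_eq_zero fun _ _ => by
    rw [hF.f_eq_zero_of_toMor_eq_smul_id (by omega) hmt hid, hE.comp_zero]

lemma rhsTerm_eq_zero_of_le (hF : F.IsStrictlyUnital) (hE : E.IsHomogeneousUnital) (hm : m < n)
    (hid : toMor (α m) = c • toMor (D.id X)) (htm : t ≤ m) (htn : t + 1 ≠ n) :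
    rhsTerm F α n t = 0 := by
  obtain ⟨s, rfl⟩ := Nat.exists_eq_add_of_le htm
  exact rhsTerm_eq_zero fun _ _ => by
    rw [hF.f_eq_zero_of_toMor_eq_smul_id (m := s) (by omega) (by omega) hid, hE.zero_comp]

lemma rhsTerm_one (hF : F.IsStrictlyUnital) (hE : E.IsHomogeneousUnital)
    (hid : toMor (α 0) = c • toMor (D.id X)) (hn : 1 < n) :
    rhsTerm F α n 1 = -unitTerm F (Nat.zero_lt_of_lt hn) hid := by
  have hA : A (0 + 1) = A 0 := tgt_eq_src_of_eq_smul_id hid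
  have hf : toMor (F.f (n - 1) _ _ fun t => α (1 + t)) =
      toMor (F.f (n - 1) _ _ (D.eraseLoop α 0 hA)) :=
    hF.toMor_f_congr (by omega) fun t _ =>
      (congrArg (fun s => toMor (α s)) (add_comm 1 t)).trans
        (toMor_eraseLoop_of_le α hA t.zero_le).symm
  apply toMor_injective
  rw [toMor_rhsTerm le_rfl hn, hE.toMor_comp_of_right_eq_smul_id _ (hF.toMor_f_one hid), hf,
    toMor_neg, toMor_unitTerm, smul_smul, smul_smul, ← mul_assoc, add_comm,
    zpow_one_add₀ (neg_ne_zero.mpr one_ne_zero)]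

lemma rhsTerm_last (hF : F.IsStrictlyUnital) (hE : E.IsHomogeneousUnital)
    (hid : toMor (α m) = c • toMor (D.id X)) (h1 : 1 ≤ m) :
    rhsTerm F α (m + 1) m = unitTerm F m.lt_succ_self hid := by
  have hA : A (m + 1) = A m := tgt_eq_src_of_eq_smul_id hid
  have hg : g m + 1 = 0 := deg_eq_zero_of_eq_smul_id hid
  have hid' : toMor (F.f (m + 1 - m) _ _ fun t => α (m + t)) = c • toMor (E.id (F.obj X)) := by
    rw [Nat.add_sub_cancel_left]
    exact hF.toMor_f_one hid
  have hf : toMor (F.f m A g α) = toMor (F.f (m + 1 - 1) _ _ (D.eraseLoop α m hA)) :=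
    hF.toMor_f_congr h1 fun t ht => (toMor_eraseLoop_of_lt α hA ht).symm
  have hsign : psum g (m + 1) - psum g m + 1 = psum g (m + 1) - psum g (m + 1) := by
    rw [psum_succ, add_sub_cancel_left, hg, sub_self]
  apply toMor_injective
  rw [toMor_rhsTerm h1 m.lt_succ_self, hE.toMor_comp_of_left_eq_smul_id _ hid', hf, toMor_unitTerm,
    smul_smul, hsign]

lemma eqRhs_eq (hF : F.IsStrictlyUnital) (hE : E.IsHomogeneousUnital) (hm : m < n)
    (hid : toMor (α m) = c • toMor (D.id X)) :
    eqRhs F n A g α = (if 1 < n ∧ m = 0 then -unitTerm F hm hid else 0) +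
      if 1 ≤ m ∧ m + 1 = n then unitTerm F hm hid else 0 := by
  have hterm : ∀ t ∈ Finset.range n, rhsTerm F α n t =
      (if t = 1 then if m = 0 then -unitTerm F hm hid else 0 else 0) +
        if t = m then if 1 ≤ m ∧ m + 1 = n then unitTerm F hm hid else 0 else 0 := by
    intro t ht
    have htn : t < n := Finset.mem_range.mp ht
    rcases lt_trichotomy t m with htm | rfl | hmt
    · rw [hF.rhsTerm_eq_zero_of_le hE hm hid htm.le (by omega), if_neg htm.ne,
        if_neg (t.zero_le.trans_lt htm).ne', ite_self, add_zero]
    · rw [if_pos rfl, ← ite_and, if_neg (by omega), zero_add]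
      split_ifs with h
      · obtain ⟨h1, rfl⟩ := h
        exact hF.rhsTerm_last hE hid h1
      · by_cases h1 : 1 ≤ t
        · exact hF.rhsTerm_eq_zero_of_le hE hm hid le_rfl fun hn => h ⟨h1, hn⟩
        · exact rhsTerm_eq_zero fun h' => absurd h' h1
    · rw [if_neg hmt.ne', add_zero]
      split_ifs with ht1 hm0
      · subst ht1 hm0
        exact hF.rhsTerm_one hE hid htn
      · omega
      · exact hF.rhsTerm_eq_zero_of_lt hE hid hmt ht1
  rw [eqRhs_eq_sum, hF.d_f_eq_zero hE hm hid, sub_zero, Finset.sum_congr rfl hterm,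
    Finset.sum_add_distrib, Finset.sum_ite_eq', Finset.sum_ite_eq',
    if_pos (Finset.mem_range.mpr hm)]
  simp only [Finset.mem_range, ite_and]

end IsStrictlyUnital

end AInfFunData

theorem statement_16_general {D E : DGData k} {F : AInfFunData D E} (hD : D.IsHomogeneousUnital)
    (hE : E.IsHomogeneousUnital) (hF : F.IsStrictlyUnital) {n : ℕ} {A : ℕ → D.Obj} {g : ℕ → ℤ}
    {α : D.Chain A g} {m : ℕ} (hm : m < n) {c : k} {X : D.Obj}
    (hid : toMor (α m) = c • toMor (D.id X)) : eqLhs F n A g α = eqRhs F n A g α := by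
  rw [hF.eqLhs_eq hD hm hid, hF.eqRhs_eq hE hm hid]
  rcases m.eq_zero_or_pos with rfl | h0
  · simp [Nat.lt_iff_add_one_le]
  · rcases (Nat.succ_le_of_lt hm).eq_or_lt with rfl | hlt
    · simp [h0.ne']
    · simp [h0.ne', hlt.ne, Nat.succ_le_of_lt h0, Nat.succ_le_of_lt hlt]

end

/-- **Statement 16.** Let `A` and `B` be dg categories.  Suppose given a map
`f` on objects and degree-0 components `f_n` which strictly respect
identities.  Then for every chain of composable morphisms `α^n, …, α^1` of `A`
in which some `α^i` is a scalar multiple of an identity, the defining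
A∞-functor equation
`∑ f_n ∘ (1^{⊗i} ⊗ b₁ ⊗ 1^{⊗·}) + ∑ f_{n-1} ∘ (1^{⊗i} ⊗ b₂ ⊗ 1^{⊗·})
  = ∑ b₂ ∘ (f_i ⊗ f_{n-i}) + b₁ ∘ f_n`
is automatically satisfied when evaluated at `(sα^n, …, sα^1)`. -/
theorem statement_16 {k : Type} [Field k] (D E : DGData k)
    (hD : IsDGCat D) (hE : IsDGCat E) (F : AInfFunData D E)
    -- `f` strictly respects identities:
    (hunit_one : ∀ A₀ : D.Obj,
      F.f 1 (fun _ => A₀) (fun _ => (-1 : ℤ))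
          (fun _ => D.cast (by norm_num) (D.id A₀)) =
        E.cast (by norm_num [psum]) (E.id (F.obj A₀)))
    (hunit_vanish : ∀ (n : ℕ) (A : ℕ → D.Obj) (g : ℕ → ℤ) (α : D.Chain A g) (m : ℕ),
      2 ≤ n → m < n → A (m + 1) = A m → g m = -1 →
      HEq (α m) (D.id (A m)) → F.f n A g α = 0)
    -- and the components only depend on the listed entries and are multilinear:
    (hext : ∀ (n : ℕ) (A A' : ℕ → D.Obj) (g g' : ℕ → ℤ)
      (α : D.Chain A g) (α' : D.Chain A' g'),
      (∀ m, m ≤ n → A m = A' m) → (∀ m, m < n → g m = g' m) →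
      (∀ m, m < n → HEq (α m) (α' m)) → HEq (F.f n A g α) (F.f n A' g' α'))
    (hadd : ∀ (n : ℕ) (A : ℕ → D.Obj) (g : ℕ → ℤ) (α : D.Chain A g) (m : ℕ),
      m < n → ∀ u v : D.Hom (A m) (A (m + 1)) (g m + 1),
      F.f n A g (D.upd0 α m (u + v)) =
        F.f n A g (D.upd0 α m u) + F.f n A g (D.upd0 α m v))
    (hsmul : ∀ (n : ℕ) (A : ℕ → D.Obj) (g : ℕ → ℤ) (α : D.Chain A g) (m : ℕ),
      m < n → ∀ (c : k) (u : D.Hom (A m) (A (m + 1)) (g m + 1)),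
      F.f n A g (D.upd0 α m (c • u)) = c • F.f n A g (D.upd0 α m u)) :
    -- conclusion: the A∞-functor equation holds on every chain one of whose
    -- entries is a scalar multiple of an identity
    ∀ (n : ℕ), 1 ≤ n → ∀ (A : ℕ → D.Obj) (g : ℕ → ℤ) (α : D.Chain A g) (m : ℕ),
      m < n → ∀ c : k, A (m + 1) = A m → g m = -1 →
      HEq (α m) (c • D.id (A m)) →
      eqLhs F n A g α = eqRhs F n A g α := by
  intro n _ A g α m hm c hA hg hid
  exact statement_16_general hD.isHomogeneousUnital hE.isHomogeneousUnital
    ⟨hext, hsmul, hunit_one, hunit_vanish⟩ hm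
    (DGData.Mor.toMor_eq_toMor rfl hA (by rw [hg, neg_add_cancel]) hid)

end P
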